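/- arXiv:1505.03957 — 3 statements merged into one kernel-verified Lean document; each statement's English description precedes it below -/
import Mathlib

section
/- Let f, g ∈ ℂ[T] be nonconstant polynomials. If f and g are multiplicatively independent (i.e., there is no nonzero (ν₁,ν₂) ∈ ℤ² with f^{ν₁} g^{ν₂} = 1 in ℂ(T)), then for all integers n, m ≥ 1, deg gcd(fⁿ − 1, gᵐ − 1) ≤ (11(d_f + d_g)²)^{min(d_f, d_g)}. -/
open Polynomial

lemma aux_val {Ω Γ : Type*} [Field Ω] [Algebra ℂ Ω] [LinearOrderedCommGroupWithZero Γ]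
    (v : Valuation Ω Γ) (hv : ∀ c : ℂ, v (algebraMap ℂ Ω c) ≤ 1) (x : Ω) (hx : 1 < v x) :
    ∀ (d : ℕ) (p : ℂ[X]), p.natDegree = d → p ≠ 0 → v (aeval x p) = v x ^ d := by
  intro d
  induction d with
  | zero =>
    intro p hp hp0
    obtain ⟨c, rfl⟩ := natDegree_eq_zero.mp hp
    have hc : c ≠ 0 := by simpa using hp0
    have h1 := hv c
    have h2 := hv c⁻¹
    have h3 : v (algebraMap ℂ Ω c) * v (algebraMap ℂ Ω c⁻¹) = 1 := by
      rw [← map_mul, ← map_mul, mul_inv_cancel₀ hc]; simp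
    simp only [aeval_C, pow_zero]
    refine le_antisymm h1 ?_
    rw [← h3]
    exact mul_le_of_le_one_right' h2
  | succ d ih =>
    intro p hp hp0
    have hd : p.divX.natDegree = d := by rw [natDegree_divX_eq_natDegree_tsub_one, hp]; simp
    have hd0 : p.divX ≠ 0 := by
      intro h
      rw [divX_eq_zero_iff] at h
      rw [h] at hp
      simp at hp
    have h := ih _ hd hd0
    have e : aeval x p = aeval x p.divX * x + algebraMap ℂ Ω (p.coeff 0) := by
      conv_lhs => rw [← divX_mul_X_add p]
      simp
    have e2 : v (aeval x p.divX * x) = v x ^ (d+1) := by rw [map_mul, h, pow_succ]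
    rw [e, Valuation.map_add_eq_of_lt_left, e2]
    rw [e2]
    exact (hv _).trans_lt (one_lt_pow₀ hx (by simp))

lemma aux_int {Ω : Type*} [Field Ω] [Algebra ℂ Ω] (t s : Ω) (f g F G : ℂ[X])
    (hf0 : f ≠ 0) (hg0 : g ≠ 0) (hF0 : F ≠ 0) (hG0 : G ≠ 0)
    (hF : F.natDegree = f.natDegree) (hG : G.natDegree = g.natDegree)
    (h1 : aeval t f * aeval s F = 1) (h2 : aeval t g * aeval s G = 1) :
    IsIntegral ℂ ((aeval t f) ^ g.natDegree / (aeval t g) ^ f.natDegree) := by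
  set u := (aeval t f) ^ g.natDegree / (aeval t g) ^ f.natDegree with hu
  have key : ∀ V : ValuationSubring Ω, (Set.range (algebraMap ℂ Ω)) ⊆ V.toSubring → u ∈ V := by
    intro V hV
    have hv : ∀ c : ℂ, V.valuation (algebraMap ℂ Ω c) ≤ 1 := fun c =>
      (V.valuation_le_one_iff _).mpr (hV ⟨c, rfl⟩)
    have hm : ∀ (x : Ω) (_ : V.valuation x ≤ 1) (p : ℂ[X]), V.valuation (aeval x p) ≤ 1 := by
      intro x hx p
      rw [aeval_eq_sum_range]
      refine Valuation.map_sum_le _ fun i _ => ?_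
      rw [Algebra.smul_def, map_mul, map_pow]
      exact mul_le_one' (hv _) (pow_le_one' hx _)
    rw [← V.valuation_le_one_iff]
    have h1' : V.valuation (aeval t f) * V.valuation (aeval s F) = 1 := by rw [← map_mul, h1, map_one]
    have h2' : V.valuation (aeval t g) * V.valuation (aeval s G) = 1 := by rw [← map_mul, h2, map_one]
    have hvu : V.valuation u = V.valuation (aeval t f) ^ g.natDegree / V.valuation (aeval t g) ^ f.natDegree := by
      rw [hu, map_div₀, map_pow, map_pow]
    rcases lt_or_ge 1 (V.valuation t) with ht | ht
    · rw [hvu, aux_val _ hv t ht _ f rfl hf0, aux_val _ hv t ht _ g rfl hg0, ← pow_mul, ← pow_mul,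
        mul_comm]
      exact div_self_le_one _
    · rcases lt_or_ge 1 (V.valuation s) with hs | hs
      · rw [hvu, eq_inv_of_mul_eq_one_left h1', eq_inv_of_mul_eq_one_left h2',
          aux_val _ hv s hs _ F rfl hF0, aux_val _ hv s hs _ G rfl hG0, hF, hG, inv_pow, inv_pow,
          ← pow_mul, ← pow_mul, mul_comm]
        exact div_self_le_one _
      · have a1 : V.valuation (aeval t f) ≤ 1 := hm t ht f
        have a3 : V.valuation (aeval s G) ≤ 1 := hm s hs G
        rw [hvu, eq_inv_of_mul_eq_one_left h2', inv_pow, div_inv_eq_mul]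
        exact mul_le_one' (pow_le_one' a1 _) (pow_le_one' a3 _)
  have := (iInf_valuationSubring_superset (K := Ω) (s := Set.range (algebraMap ℂ Ω)))
  have hmem : u ∈ (⨅ V : {V : ValuationSubring Ω // Set.range (algebraMap ℂ Ω) ⊆ V.toSubring}, V.1.toSubring) := by
    rw [Subring.mem_iInf]
    rintro ⟨V, hV⟩
    exact key V hV
  rw [this] at hmem
  have hint : IsIntegral (Subring.closure (Set.range (algebraMap ℂ Ω))) u := hmem
  let ι : ℂ →+* Subring.closure (Set.range (algebraMap ℂ Ω)) :=
    (algebraMap ℂ Ω).codRestrict _ fun c => Subring.subset_closure ⟨c, rfl⟩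
  have hsurj : Function.Surjective ι := by
    rintro ⟨y, hy⟩
    have hle : Subring.closure (Set.range (algebraMap ℂ Ω)) ≤ (algebraMap ℂ Ω).range :=
      Subring.closure_le.mpr (by rintro _ ⟨c, rfl⟩; exact ⟨c, rfl⟩)
    obtain ⟨c, hc⟩ := hle hy
    exact ⟨c, Subtype.ext hc⟩
  let _ : Algebra ℂ (Subring.closure (Set.range (algebraMap ℂ Ω))) := ι.toAlgebra
  have : IsScalarTower ℂ (Subring.closure (Set.range (algebraMap ℂ Ω))) Ω :=
    IsScalarTower.of_algebraMap_eq fun c => rfl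
  have : Algebra.IsIntegral ℂ (Subring.closure (Set.range (algebraMap ℂ Ω))) := ⟨fun x => by
    obtain ⟨c, rfl⟩ := hsurj x
    exact isIntegral_algebraMap⟩
  exact isIntegral_trans _ hint

lemma aux_mult (f : ℂ[X]) (hf : 0 < f.natDegree) (n : ℕ) (hn : 1 ≤ n) (a : ℂ)
    (ha : f.eval a ^ n = 1) : (f ^ n - 1).rootMultiplicity a ≤ f.natDegree := by
  have h0 : f ^ n - 1 ≠ 0 := by
    intro h
    have : (f^n).natDegree = 0 := by rw [sub_eq_zero.mp h]; simp
    rw [natDegree_pow] at this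
    have := Nat.mul_pos hn hf
    omega
  have hfac : f ^ n - 1 = (∑ i ∈ Finset.range n, f ^ i * (C (f.eval a)) ^ (n - 1 - i)) * (f - C (f.eval a)) := by
    rw [(Commute.all _ _).geom_sum₂_mul, ← C_pow, ha, C_1]
  have hr : (∑ i ∈ Finset.range n, f ^ i * (C (f.eval a)) ^ (n - 1 - i)).eval a ≠ 0 := by
    have : (∑ i ∈ Finset.range n, f ^ i * (C (f.eval a)) ^ (n - 1 - i)).eval a = n * (f.eval a) ^ (n-1) := by
      rw [eval_finsetSum]
      rw [Finset.sum_congr rfl (g := fun _ => (f.eval a) ^ (n-1))]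
      · simp
      · intro i hi
        have := Finset.mem_range.mp hi
        simp only [eval_mul, eval_pow, eval_C]
        rw [← pow_add]; congr 1; omega
    rw [this]
    have : f.eval a ≠ 0 := by
      intro h; rw [h, zero_pow (by omega)] at ha; simp at ha
    have : (n:ℂ) ≠ 0 := by exact_mod_cast (by omega : n ≠ 0)
    positivity
  rw [hfac] at h0 ⊢
  rw [rootMultiplicity_mul h0, rootMultiplicity_eq_zero (by simpa [IsRoot] using hr), zero_add]
  have h3 : f - C (f.eval a) ≠ 0 := right_ne_zero_of_mul h0
  calc _ ≤ (f - C (f.eval a)).natDegree := by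
        rw [← count_roots]
        exact (Multiset.count_le_card _ _).trans (card_roots' _)
    _ = _ := natDegree_sub_C ..

lemma aux_res_deg {A B : ℂ[X][X]} (df dg : ℕ)
    (hA : ∀ i, (A.coeff i).natDegree ≤ df) (hB : ∀ i, (B.coeff i).natDegree ≤ dg) :
    (resultant A B df dg).natDegree ≤ 2 * (df * dg) := by
  rw [resultant, Matrix.det_apply]
  refine natDegree_sum_le_of_forall_le _ _ fun σ _ => ?_
  refine (natDegree_smul_le _ _).trans ?_
  refine (natDegree_prod_le _ _).trans ?_
  rw [Fin.sum_univ_add]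
  have e1 : ∀ i : Fin df, (sylvester A B df dg (σ (Fin.castAdd dg i)) (Fin.castAdd dg i)).natDegree ≤ dg := by
    intro i
    simp only [sylvester, Matrix.of_apply, Fin.addCases_left]
    split_ifs
    · exact hB _
    · simp
  have e2 : ∀ i : Fin dg, (sylvester A B df dg (σ (Fin.natAdd df i)) (Fin.natAdd df i)).natDegree ≤ df := by
    intro i
    simp only [sylvester, Matrix.of_apply, Fin.addCases_right]
    split_ifs
    · exact hA _
    · simp
  have := Finset.sum_le_sum (s := Finset.univ) fun i _ => e1 i
  have := Finset.sum_le_sum (s := Finset.univ) fun i _ => e2 i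
  simp at *
  nlinarith

lemma aux_dep (f g F G : ℂ[X]) (hf : 0 < f.natDegree) (hg : 0 < g.natDegree)
    (hF : F.natDegree = f.natDegree) (hG : G.natDegree = g.natDegree)
    (hR : resultant (C f * F.map C - 1) (C g * G.map C - 1) f.natDegree g.natDegree = 0) :
    ∃ c : ℂ, f ^ g.natDegree = C c * g ^ f.natDegree := by
  have hf0 : f ≠ 0 := by rintro rfl; simp at hf
  have hg0 : g ≠ 0 := by rintro rfl; simp at hg
  have hF0 : F ≠ 0 := by rintro rfl; simp at hF; omega
  have hG0 : G ≠ 0 := by rintro rfl; simp at hG; omega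
  let Ω := AlgebraicClosure (RatFunc ℂ)
  let φ : ℂ[X] →ₐ[ℂ] Ω := IsScalarTower.toAlgHom ℂ ℂ[X] Ω
  have hφ : Function.Injective φ := by
    change Function.Injective (algebraMap ℂ[X] Ω)
    rw [IsScalarTower.algebraMap_eq ℂ[X] (RatFunc ℂ) Ω]
    exact (algebraMap (RatFunc ℂ) Ω).injective.comp (RatFunc.algebraMap_injective ℂ)
  have hφX : ∀ p : ℂ[X], φ p = aeval (φ X) p := by
    intro p
    rw [aeval_algHom_apply, aeval_X_left_apply]
  have hmap : ∀ p P : ℂ[X], (C p * P.map C - 1).map (φ : ℂ[X] →+* Ω)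
      = C (φ p) * P.map (algebraMap ℂ Ω) - 1 := by
    intro p P
    have : ((φ : ℂ[X] →+* Ω)).comp C = algebraMap ℂ Ω := by
      ext c; exact φ.commutes c
    simp [Polynomial.map_map, this]
  have hdeg : ∀ p P : ℂ[X], p ≠ 0 → (C (φ p) * P.map (algebraMap ℂ Ω) - 1).natDegree = P.natDegree := by
    intro p P hp
    rw [← C_1, natDegree_sub_C, natDegree_C_mul ((map_ne_zero_iff φ hφ).mpr hp), natDegree_map]
  have h := congrArg (φ : ℂ[X] →+* Ω) hR
  rw [← resultant_map_map, map_zero, hmap, hmap] at h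
  have h' : resultant (C (φ f) * F.map (algebraMap ℂ Ω) - 1) (C (φ g) * G.map (algebraMap ℂ Ω) - 1) = 0 := by
    rw [hdeg f F hf0, hdeg g G hg0, hF, hG]; exact h
  rw [resultant_eq_zero_iff, isCoprime_iff_aeval_ne_zero_of_isAlgClosed Ω Ω] at h'
  obtain ⟨s, hs⟩ := not_forall.mp h'.2
  push Not at hs
  simp only [coe_aeval_eq_eval, eval_sub, eval_mul, eval_C, eval_map_algebraMap, eval_one, sub_eq_zero] at hs
  rw [hφX f, hφX g] at hs
  have hI := aux_int (φ X) s f g F G hf0 hg0 hF0 hG0 hF hG hs.1 hs.2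
  obtain ⟨c, hc⟩ := minpoly.mem_range_of_degree_eq_one ℂ _
    (IsAlgClosed.degree_eq_one_of_irreducible ℂ (minpoly.irreducible hI))
  refine ⟨c, hφ ?_⟩
  rw [← hφX f, ← hφX g] at hc
  have : φ g ≠ 0 := (map_ne_zero_iff φ hφ).mpr hg0
  rw [eq_div_iff (pow_ne_zero _ this)] at hc
  rw [map_mul, map_pow, map_pow, ← hc]
  congr 1

/-- Lemma 2.2 (uniform Ailon–Rudnick): if `f, g` are multiplicatively independent
nonconstant polynomials, then `deg gcd(fⁿ − 1, gᵐ − 1) ≤ (11 (d_f + d_g)²)^{min(d_f, d_g)}`. -/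
theorem stmt_6 (f g : Polynomial ℂ)
    (hf : 0 < f.natDegree) (hg : 0 < g.natDegree)
    (hind : ¬ ∃ (ν₁ ν₂ : ℤ), (ν₁, ν₂) ≠ (0, 0) ∧
      (algebraMap (Polynomial ℂ) (RatFunc ℂ) f) ^ ν₁ *
        (algebraMap (Polynomial ℂ) (RatFunc ℂ) g) ^ ν₂ = 1)
    (n m : ℕ) (hn : 1 ≤ n) (hm : 1 ≤ m) :
    (EuclideanDomain.gcd (f ^ n - 1) (g ^ m - 1)).natDegree ≤
      (11 * (f.natDegree + g.natDegree) ^ 2) ^ (min f.natDegree g.natDegree) := by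
  have hne : ∀ (p : ℂ[X]) (k : ℕ), 0 < p.natDegree → 1 ≤ k → p ^ k - 1 ≠ 0 := by
    intro p k hp hk h
    have : (p^k).natDegree = 0 := by rw [sub_eq_zero.mp h]; simp
    rw [natDegree_pow] at this
    have := Nat.mul_pos hk hp
    omega
  set D := EuclideanDomain.gcd (f ^ n - 1) (g ^ m - 1) with hD
  have hD1 : D ∣ f ^ n - 1 := EuclideanDomain.gcd_dvd_left _ _
  have hD2 : D ∣ g ^ m - 1 := EuclideanDomain.gcd_dvd_right _ _
  have hD0 : D ≠ 0 := ne_zero_of_dvd_ne_zero (hne f n hf hn) hD1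
  have hroot : ∀ a ∈ D.roots, f.eval a ^ n = 1 ∧ g.eval a ^ m = 1 := by
    intro a ha
    have ha' : D.IsRoot a := isRoot_of_mem_roots ha
    have h1 := ha'.dvd hD1
    have h2 := ha'.dvd hD2
    simp only [IsRoot, eval_sub, eval_pow, eval_one, sub_eq_zero] at h1 h2
    exact ⟨h1, h2⟩
  have hcard : D.natDegree = Multiset.card D.roots :=
    (IsAlgClosed.splits D).natDegree_eq_card_roots
  have hmult : ∀ a ∈ D.roots.toFinset, D.roots.count a ≤ min f.natDegree g.natDegree := by
    intro a ha
    obtain ⟨h1, h2⟩ := hroot a (Multiset.mem_toFinset.mp ha)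
    rw [count_roots]
    refine le_min ?_ ?_
    · exact (rootMultiplicity_le_rootMultiplicity_of_dvd (hne f n hf hn) hD1 a).trans
        (aux_mult f hf n hn a h1)
    · exact (rootMultiplicity_le_rootMultiplicity_of_dvd (hne g m hg hm) hD2 a).trans
        (aux_mult g hg m hm a h2)
  have hbound : D.natDegree ≤ D.roots.toFinset.card * min f.natDegree g.natDegree := by
    rw [hcard, ← Multiset.toFinset_sum_count_eq]
    exact (Finset.sum_le_card_nsmul _ _ _ hmult).trans (by simp)
  set F := f.map (starRingEnd ℂ) with hFdef
  set G := g.map (starRingEnd ℂ) with hGdef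
  have hF : F.natDegree = f.natDegree := natDegree_map _
  have hG : G.natDegree = g.natDegree := natDegree_map _
  set R := resultant (C f * F.map C - 1) (C g * G.map C - 1) f.natDegree g.natDegree with hRdef
  by_cases hR : R = 0
  · obtain ⟨c, hc⟩ := aux_dep f g F G hf hg hF hG hR
    have hempty : D.roots = 0 := by
      refine Multiset.eq_zero_of_forall_notMem fun a ha => hind ?_
      obtain ⟨h1, h2⟩ := hroot a ha
      have hca := congrArg (eval a) hc
      simp only [eval_pow, eval_mul, eval_C] at hca
      have hc1 : c ^ (n * m) = 1 := by
        have := congrArg (· ^ (n * m)) hca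
        simp only [mul_pow] at this
        rw [← pow_mul, ← pow_mul,
          show g.natDegree * (n * m) = n * (g.natDegree * m) by ring,
          show f.natDegree * (n * m) = m * (f.natDegree * n) by ring,
          pow_mul _ n, h1, pow_mul _ m (f.natDegree * n), h2] at this
        simpa using this.symm
      have hfg : f ^ (g.natDegree * (n * m)) = g ^ (f.natDegree * (n * m)) := by
        rw [pow_mul, hc, mul_pow, ← C_pow, hc1, C_1, one_mul, ← pow_mul]
      refine ⟨(g.natDegree * (n * m) : ℕ), -(f.natDegree * (n * m) : ℕ), ?_, ?_⟩
      · intro h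
        have := (Prod.mk.inj h).1
        have h3 : 0 < g.natDegree * (n * m) := by positivity
        omega
      · have hg0 : g ≠ 0 := by rintro rfl; simp at hg
        have : algebraMap ℂ[X] (RatFunc ℂ) g ≠ 0 := by simpa using hg0
        rw [zpow_neg, zpow_natCast, zpow_natCast, ← map_pow, ← map_pow, hfg, map_pow]
        exact mul_inv_cancel₀ (pow_ne_zero _ this)
    rw [hcard, hempty]; simp
  · have hAdeg : ∀ p P : ℂ[X], ∀ i, ((C p * P.map C - 1 : ℂ[X][X]).coeff i).natDegree ≤ p.natDegree := by
      intro p P i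
      rw [coeff_sub, coeff_C_mul, coeff_map, coeff_one]
      refine (natDegree_sub_le _ _).trans (max_le (natDegree_mul_C_le _ _) ?_)
      split_ifs <;> simp
    have hRdeg : R.natDegree ≤ 2 * (f.natDegree * g.natDegree) :=
      aux_res_deg _ _ (hAdeg f F) (hAdeg g G)
    have hnd : ∀ p P : ℂ[X], P.natDegree = p.natDegree →
        (C p * P.map C - 1 : ℂ[X][X]).natDegree ≤ p.natDegree := by
      intro p P hP
      rw [← C_1, natDegree_sub_C]
      exact (natDegree_C_mul_le _ _).trans (natDegree_map_le.trans hP.le)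
    obtain ⟨p, q, -, -, hpq⟩ := exists_mul_add_mul_eq_C_resultant (m := f.natDegree)
      (n := g.natDegree) _ _ (hnd f F hF) (hnd g G hG) (Or.inl hf.ne')
    have hconj : ∀ (p : ℂ[X]) (a : ℂ) (k : ℕ), 1 ≤ k → p.eval a ^ k = 1 →
        eval a (eval (C (starRingEnd ℂ a)) (C p * (p.map (starRingEnd ℂ)).map C - 1 : ℂ[X][X])) = 0 := by
      intro p a k hk hp
      have hnorm : ‖p.eval a‖ = 1 := Complex.norm_eq_one_of_pow_eq_one hp (by omega)
      have hconj : eval (starRingEnd ℂ a) (p.map (starRingEnd ℂ)) = starRingEnd ℂ (p.eval a) := by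
        rw [eval_map, eval₂_hom]
      rw [eval_sub, eval_mul, eval_C, eval_one, eval_sub, eval_mul, eval_one, eval_map, eval₂_hom,
        eval_C, hconj, Complex.mul_conj, Complex.normSq_eq_norm_sq, hnorm]
      simp
    have hsub : D.roots.toFinset ⊆ R.roots.toFinset := by
      intro a ha
      obtain ⟨h1, h2⟩ := hroot a (Multiset.mem_toFinset.mp ha)
      rw [Multiset.mem_toFinset, mem_roots hR]
      have := congrArg (fun x => eval a (eval (C (starRingEnd ℂ a)) x)) hpq
      simp only [eval_add] at this
      rw [eval_mul, eval_mul, eval_mul, eval_mul, hconj f a n hn h1,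
        hconj g a m hm h2] at this
      simpa using this.symm
    have hc : D.roots.toFinset.card ≤ 2 * (f.natDegree * g.natDegree) :=
      (Finset.card_le_card hsub).trans ((Multiset.toFinset_card_le _).trans
        ((card_roots' R).trans hRdeg))
    set k := min f.natDegree g.natDegree with hk
    set B := 11 * (f.natDegree + g.natDegree) ^ 2 with hB
    have hB1 : 2 * (f.natDegree * g.natDegree) ≤ B := by
      rw [hB]; nlinarith [Nat.zero_le (f.natDegree^2), Nat.zero_le (g.natDegree^2)]
    have hk1 : 0 < k := lt_min hf hg
    have hB2 : 1 < B := by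
      have : 0 < f.natDegree * g.natDegree := Nat.mul_pos hf hg
      omega
    obtain ⟨j, hj⟩ : ∃ j, k = j + 1 := ⟨k - 1, by omega⟩
    have hjB : j + 1 ≤ B ^ j := Nat.lt_pow_self hB2
    calc D.natDegree ≤ D.roots.toFinset.card * k := hbound
      _ ≤ B * B ^ j := by
          refine Nat.mul_le_mul (hc.trans hB1) ?_
          rw [hj]; exact hjB
      _ = B ^ k := by rw [hj, pow_succ]; ring
end

section
/- Let f, g ∈ ℂ[T] be nonconstant multiplicatively independent polynomials. Then there exists a nonzero polynomial h ∈ ℂ[T] such that gcd(fⁿ − 1, gᵐ − 1) divides h for all integers n, m ≥ 1. -/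
open Polynomial

theorem fieldLemma {K : Type*} [Field K] [Algebra ℂ K] (z w : K) (f g f' g' : ℂ[X])
    (hd : f.natDegree = g.natDegree) (hd' : f'.natDegree = g'.natDegree)
    (h1 : aeval z f * aeval w f' = 1) (h2 : aeval z g * aeval w g' = 1) :
    ∃ c : ℂ, aeval z g * aeval w f' = algebraMap ℂ K c := by
  have hf : f ≠ 0 := by rintro rfl; simp at h1
  have hg : g ≠ 0 := by rintro rfl; simp at h2
  have hf' : f' ≠ 0 := by rintro rfl; simp at h1
  have hg' : g' ≠ 0 := by rintro rfl; simp at h2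
  have key : aeval z g * aeval w f' ∈ (integralClosure ℂ K).toSubring := by
    by_contra hx
    obtain ⟨V, hV, hxV⟩ := Subring.exists_le_valuationSubring_of_isIntegrallyClosedIn hx
    have hC : ∀ c : ℂ, algebraMap ℂ K c ∈ V := fun c =>
      hV ((integralClosure ℂ K).algebraMap_mem c)
    have hmem : ∀ (x : K) (p : ℂ[X]), x ∈ V → aeval x p ∈ V := by
      intro x p hx
      rw [aeval_eq_sum_range]
      refine sum_mem fun i _ => ?_
      rw [Algebra.smul_def]
      exact mul_mem (hC _) (pow_mem hx _)
    haveI : V.valuation.IsTrivialOn ℂ := ⟨fun c hc => by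
      have a1 := (V.valuation_le_one_iff _).2 (hC c)
      have a2 := (V.valuation_le_one_iff _).2 (hC c⁻¹)
      have a3 : V.valuation (algebraMap ℂ K c) * V.valuation (algebraMap ℂ K c⁻¹) = 1 := by
        rw [← map_mul, ← map_mul, mul_inv_cancel₀ hc]; simp
      refine le_antisymm a1 ?_
      rw [← a3]
      exact mul_le_of_le_one_right' a2⟩
    have hv1 := congrArg V.valuation h1
    have hv2 := congrArg V.valuation h2
    rw [map_mul, map_one] at hv1 hv2
    apply hxV
    by_cases hz : z ∈ V
    · by_cases hw : w ∈ V
      · exact mul_mem (hmem _ _ hz) (hmem _ _ hw)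
      · have hw1 : 1 < V.valuation w := by
          rw [← not_le, V.valuation_le_one_iff]; exact hw
        rw [← V.valuation_le_one_iff, map_mul]
        rw [valuation_aeval_eq_valuation_X_pow_natDegree_of_one_lt_valuation_X w hw1 hg',
          ← hd'] at hv2
        rw [valuation_aeval_eq_valuation_X_pow_natDegree_of_one_lt_valuation_X w hw1 hf']
        exact hv2.le
    · have hz1 : 1 < V.valuation z := by
        rw [← not_le, V.valuation_le_one_iff]; exact hz
      rw [← V.valuation_le_one_iff, map_mul]
      rw [valuation_aeval_eq_valuation_X_pow_natDegree_of_one_lt_valuation_X z hz1 hf, hd] at hv1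
      rw [valuation_aeval_eq_valuation_X_pow_natDegree_of_one_lt_valuation_X z hz1 hg]
      exact hv1.le
  have hint : IsIntegral ℂ (aeval z g * aeval w f') := key
  obtain ⟨c, hc⟩ := minpoly.mem_range_of_degree_eq_one ℂ _
    (IsAlgClosed.degree_eq_one_of_irreducible ℂ (minpoly.irreducible hint))
  exact ⟨c, hc.symm⟩

theorem circleLemma (f g : ℂ[X]) (hd : f.natDegree = g.natDegree) (S : Set ℂ) (hS : S.Infinite)
    (hf : ∀ a ∈ S, ‖f.eval a‖ = 1) (hg : ∀ a ∈ S, ‖g.eval a‖ = 1) :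
    ∃ c : ℂ, g = C c * f := by
  haveI : Infinite S := hS.to_subtype
  let U := Filter.hyperfilter S
  let φ : (S → ℂ) →+* Filter.Germ (U : Filter S) ℂ := Filter.Germ.coeRingHom (U : Filter S)
  letI : Algebra ℂ (Filter.Germ (U : Filter S) ℂ) := (φ.comp (Pi.constRingHom S ℂ)).toAlgebra
  have hae : ∀ (p : ℂ[X]) (x : S → ℂ), aeval (φ x) p = φ (fun a => p.eval (x a)) := by
    intro p x
    rw [aeval_def]
    change eval₂ (φ.comp (Pi.constRingHom S ℂ)) (φ x) p = _
    rw [← hom_eval₂]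
    congr 1
    funext a
    have := hom_eval₂ p (Pi.constRingHom S ℂ) (Pi.evalRingHom (fun _ : S => ℂ) a) x
    exact this
  have hone : ∀ p : ℂ[X], (∀ a ∈ S, ‖p.eval a‖ = 1) →
      aeval (φ fun a => (a : ℂ)) p * aeval (φ fun a => (starRingEnd ℂ) (a : ℂ))
        (p.map (starRingEnd ℂ)) = 1 := by
    intro p hp
    rw [hae, hae, ← map_mul, ← map_one φ]
    congr 1
    funext a
    simp only [Pi.mul_apply, Pi.one_apply, eval_map, eval₂_at_apply]
    rw [Complex.mul_conj, Complex.normSq_eq_norm_sq, hp a a.2]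
    simp
  obtain ⟨c, hc⟩ := fieldLemma (φ fun a => (a : ℂ)) (φ fun a => (starRingEnd ℂ) (a : ℂ)) f g
    (f.map (starRingEnd ℂ)) (g.map (starRingEnd ℂ)) hd (by simpa using hd) (hone f hf) (hone g hg)
  have h3 : aeval (φ fun a => (a : ℂ)) g = aeval (φ fun a => (a : ℂ)) (C c * f) := by
    rw [map_mul, aeval_C, ← hc, mul_assoc, mul_comm (aeval _ (f.map _)), hone f hf, mul_one]
  rw [hae, hae] at h3
  have h4 : ∀ᶠ a : S in (U : Filter S), g.eval (a : ℂ) = (C c * f).eval (a : ℂ) :=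
    Filter.Germ.coe_eq.1 h3
  refine ⟨c, Polynomial.eq_of_infinite_eval_eq _ _ fun hfin => ?_⟩
  refine Set.Finite.notMem_hyperfilter (s := {a : S | g.eval (a : ℂ) = (C c * f).eval (a : ℂ)})
    ?_ h4
  exact Set.Finite.preimage Subtype.val_injective.injOn hfin

theorem stmt_14 (f g : Polynomial ℂ)
    (hf : 0 < f.natDegree) (hg : 0 < g.natDegree)
    (hind : ¬ ∃ (ν₁ ν₂ : ℤ), (ν₁, ν₂) ≠ (0, 0) ∧
      (algebraMap (Polynomial ℂ) (RatFunc ℂ) f) ^ ν₁ *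
        (algebraMap (Polynomial ℂ) (RatFunc ℂ) g) ^ ν₂ = 1) :
    ∃ h : Polynomial ℂ, h ≠ 0 ∧ ∀ n m : ℕ, 1 ≤ n → 1 ≤ m →
      EuclideanDomain.gcd (f ^ n - 1) (g ^ m - 1) ∣ h := by
  let S : Set ℂ := {a | ∃ n m : ℕ, 1 ≤ n ∧ 1 ≤ m ∧ f.eval a ^ n = 1 ∧ g.eval a ^ m = 1}
  have hS : S.Finite := by
    by_contra hinf
    have hinf : S.Infinite := hinf
    obtain ⟨c, hc⟩ := circleLemma (f ^ g.natDegree) (g ^ f.natDegree)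
      (by rw [natDegree_pow, natDegree_pow, mul_comm]) S hinf
      (by
        rintro a ⟨n, m, hn, hm, h1, h2⟩
        rw [eval_pow, norm_pow, Complex.norm_eq_one_of_pow_eq_one h1 (by omega), one_pow])
      (by
        rintro a ⟨n, m, hn, hm, h1, h2⟩
        rw [eval_pow, norm_pow, Complex.norm_eq_one_of_pow_eq_one h2 (by omega), one_pow])
    obtain ⟨a, n, m, hn, hm, h1, h2⟩ := hinf.nonempty
    have hcN : c ^ (n * m) = 1 := by
      have h3 := congrArg (fun p => (eval a p) ^ (n * m)) hc
      simp only [eval_mul, eval_pow, eval_C, mul_pow] at h3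
      have e1 : (eval a g ^ f.natDegree) ^ (n * m) = 1 := by
        rw [← pow_mul, show f.natDegree * (n * m) = m * (f.natDegree * n) by ring, pow_mul, h2,
          one_pow]
      have e2 : (eval a f ^ g.natDegree) ^ (n * m) = 1 := by
        rw [← pow_mul, show g.natDegree * (n * m) = n * (g.natDegree * m) by ring, pow_mul, h1,
          one_pow]
      rw [e1, e2, mul_one] at h3
      exact h3.symm
    have h5 : g ^ (f.natDegree * (n * m)) = f ^ (g.natDegree * (n * m)) := by
      rw [pow_mul, hc, mul_pow, ← C_pow, hcN, C_1, one_mul, ← pow_mul]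
    have hN : 0 < n * m := Nat.mul_pos hn hm
    apply hind
    refine ⟨((g.natDegree * (n * m) : ℕ) : ℤ), -((f.natDegree * (n * m) : ℕ) : ℤ), ?_, ?_⟩
    · intro h
      have h6 : ((g.natDegree * (n * m) : ℕ) : ℤ) = 0 := (Prod.mk.inj h).1
      have : 0 < g.natDegree * (n * m) := Nat.mul_pos hg hN
      omega
    · rw [zpow_neg, zpow_natCast, zpow_natCast, ← map_pow, ← map_pow, h5]
      apply mul_inv_cancel₀
      rw [Ne, map_eq_zero_iff _ (RatFunc.algebraMap_injective ℂ)]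
      exact pow_ne_zero _ (by rintro rfl; simp at hf)
  have hne : ∀ b : ℂ, f - C b ≠ 0 := by
    intro b hb
    have := congrArg natDegree hb
    rw [natDegree_sub_C, natDegree_zero] at this
    omega
  have hh : (∏ a ∈ hS.toFinset, (f - C (f.eval a))) ≠ 0 :=
    Finset.prod_ne_zero_iff.2 fun a _ => hne _
  refine ⟨_, hh, fun n m hn hm => ?_⟩
  have hfn : f ^ n - 1 ≠ 0 := by
    intro h0
    have h1 := congrArg natDegree (sub_eq_zero.1 h0)
    rw [natDegree_pow, natDegree_one] at h1
    have := Nat.mul_pos hn hf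
    omega
  set d := EuclideanDomain.gcd (f ^ n - 1) (g ^ m - 1) with hddef
  have d1 : d ∣ f ^ n - 1 := EuclideanDomain.gcd_dvd_left _ _
  have d2 : d ∣ g ^ m - 1 := EuclideanDomain.gcd_dvd_right _ _
  have hd0 : d ≠ 0 := ne_zero_of_dvd_ne_zero hfn d1
  have hroots : d.roots ≤ (∏ a ∈ hS.toFinset, (f - C (f.eval a))).roots := by
    classical
    rw [Multiset.le_iff_count]
    intro a
    rw [count_roots, count_roots]
    by_cases ha : d.IsRoot a
    · have r1 : f.eval a ^ n = 1 := by
        have := ha.dvd d1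
        simpa [IsRoot, sub_eq_zero] using this
      have r2 : g.eval a ^ m = 1 := by
        have := ha.dvd d2
        simpa [IsRoot, sub_eq_zero] using this
      have haS : a ∈ hS.toFinset := hS.mem_toFinset.2 ⟨n, m, hn, hm, r1, r2⟩
      refine (rootMultiplicity_le_rootMultiplicity_of_dvd hfn d1 a).trans ?_
      refine le_trans ?_ (rootMultiplicity_le_rootMultiplicity_of_dvd hh
        (Finset.dvd_prod_of_mem _ haS) a)
      have hfac : f ^ n - 1 = (∑ i ∈ Finset.range n, f ^ i * C (f.eval a) ^ (n - 1 - i)) *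
          (f - C (f.eval a)) := by
        rw [(Commute.all f (C (f.eval a))).geom_sum₂_mul, ← C_pow, r1, C_1]
      rw [hfac, rootMultiplicity_mul (hfac ▸ hfn), rootMultiplicity_eq_zero, zero_add]
      intro hr
      have hb : f.eval a ≠ 0 := by
        intro hb
        rw [hb, zero_pow (by omega)] at r1
        exact zero_ne_one r1
      rw [IsRoot, eval_finsetSum] at hr
      simp only [eval_mul, eval_pow, eval_C] at hr
      rw [geom_sum₂_self] at hr
      have : (n : ℂ) ≠ 0 := by exact_mod_cast (by omega : n ≠ 0)
      exact mul_ne_zero this (pow_ne_zero _ hb) hr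
    · rw [rootMultiplicity_eq_zero ha]
      exact Nat.zero_le _
  exact ((IsAlgClosed.splits d).dvd_iff_roots_le_roots hd0 hh).2 hroots
end

section
/- Let f, g ∈ ℂ[T] be nonconstant multiplicatively independent polynomials with gcd(f − 1, g − 1) = 1. Then there are infinitely many integers n ≥ 1 such that gcd(fⁿ − 1, gⁿ − 1) = 1. -/
open Polynomial

/-- Cyclotomic polynomials stay irreducible over the fraction field of an integrally closed
domain admitting a ring hom to `ℚ`. -/
theorem aux_degree {R K L : Type*} [CommRing R] [IsDomain R] [IsIntegrallyClosed R] [Field K]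
    [Algebra R K] [IsFractionRing R K] [Field L] [CharZero L] [Algebra R L] [Algebra K L]
    [IsScalarTower R K L] (φ : R →+* ℚ) {p : ℕ} (hp : p.Prime) {ξ : L}
    (hξ : IsPrimitiveRoot ξ p) : (minpoly K ξ).natDegree = p - 1 := by
  have hinj : Function.Injective (algebraMap R L) := by
    rw [IsScalarTower.algebraMap_eq R K L]
    exact (algebraMap K L).injective.comp (IsFractionRing.injective R K)
  have : FaithfulSMul R L := (faithfulSMul_iff_algebraMap_injective R L).2 hinj
  have hroot : aeval ξ (cyclotomic p R) = 0 := by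
    rw [aeval_def, eval₂_eq_eval_map, map_cyclotomic]
    exact hξ.isRoot_cyclotomic hp.pos
  have hint : IsIntegral R ξ := ⟨cyclotomic p R, cyclotomic.monic p R, hroot⟩
  rw [minpoly.isIntegrallyClosed_eq_field_fractions' K hint, (minpoly.monic hint).natDegree_map]
  obtain ⟨q, hq⟩ := minpoly.isIntegrallyClosed_dvd hint hroot
  have hq2 := congrArg (Polynomial.map φ) hq
  rw [map_cyclotomic, Polynomial.map_mul] at hq2
  have hirr := cyclotomic.irreducible_rat hp.pos
  have hd : ((minpoly R ξ).map φ).natDegree = (minpoly R ξ).natDegree :=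
    (minpoly.monic hint).natDegree_map φ
  have hpos := minpoly.natDegree_pos hint
  rcases hirr.isUnit_or_isUnit hq2 with h | h
  · have := natDegree_eq_zero_of_isUnit h
    omega
  · have h0 := natDegree_eq_zero_of_isUnit h
    have h1 := congrArg natDegree hq2
    rw [natDegree_mul ((minpoly.monic hint).map φ).ne_zero h.ne_zero, natDegree_cyclotomic,
      Nat.totient_prime hp] at h1
    omega

open scoped IntermediateField.algebraAdjoinAdjoin in
/-- The coefficient field. -/
theorem aux_field (f g : ℂ[X]) : ∃ (D : ℕ) (K : Subfield ℂ),
    (∃ f' : K[X], f'.map (algebraMap K ℂ) = f) ∧ (∃ g' : K[X], g'.map (algebraMap K ℂ) = g) ∧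
    ∀ (p : ℕ) (ξ t : ℂ) (P h : K[X]), p.Prime → IsPrimitiveRoot ξ p → aeval t h = ξ →
      P ≠ 0 → aeval t P = 0 → p - 1 ≤ D * P.natDegree := by
  obtain ⟨ι, x, hx⟩ := exists_isTranscendenceBasis' ℚ ℂ
  have halg : Algebra.IsAlgebraic (IntermediateField.adjoin ℚ (Set.range x)) ℂ :=
    hx.isAlgebraic_field
  let R := Algebra.adjoin ℚ (Set.range x)
  let e : MvPolynomial ι ℚ ≃ₐ[ℚ] R := hx.1.aevalEquiv
  have : IsIntegrallyClosed R := IsIntegrallyClosed.of_equiv e.toRingEquiv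
  let φ : R →+* ℚ := (MvPolynomial.aeval (fun _ => (0 : ℚ))).toRingHom.comp
    (e.symm.toRingEquiv.toRingHom : R →+* MvPolynomial ι ℚ)
  let K₀ := IntermediateField.adjoin ℚ (Set.range x)
  let S : Set ℂ := ↑(f.coeffs ∪ g.coeffs)
  have : Finite S := Finset.finite_toSet _
  let K := IntermediateField.adjoin K₀ S
  have : FiniteDimensional K₀ K := IntermediateField.finiteDimensional_adjoin
    fun x _ => Algebra.IsIntegral.isIntegral x
  have hlift : ∀ q : ℂ[X], (q.coeffs : Set ℂ) ⊆ S → ∃ q' : K[X], q'.map (algebraMap K ℂ) = q := by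
    intro q hq
    have : q ∈ lifts (algebraMap K ℂ) := by
      rw [lifts_iff_coeff_lifts]
      intro n
      by_cases h0 : q.coeff n = 0
      · exact ⟨0, by simp [h0]⟩
      · exact ⟨⟨q.coeff n, IntermediateField.subset_adjoin K₀ S (hq (coeff_mem_coeffs h0))⟩, rfl⟩
    exact (mem_lifts _).1 this
  refine ⟨Module.finrank K₀ K, K.toSubfield, hlift f ?_, hlift g ?_, ?_⟩
  · intro a ha; simp [S] at ha ⊢; exact Or.inl ha
  · intro a ha; simp [S] at ha ⊢; exact Or.inr ha
  intro p ξ t P h hp hξ ht hP0 hPt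
  change K[X] at P h
  change aeval (R := K) t P = 0 at hPt
  change aeval (R := K) t h = ξ at ht
  have htint : IsIntegral K t := Algebra.IsIntegral.isIntegral t
  have hdeg : (minpoly K t).natDegree ≤ P.natDegree :=
    natDegree_le_of_dvd (minpoly.dvd K t hPt) hP0
  have h1 : (minpoly K₀ ξ).natDegree = p - 1 := aux_degree φ hp hξ
  let E := IntermediateField.adjoin K {t}
  have hξE : ξ ∈ E := by
    rw [← ht]
    have := aeval_mem_adjoin_singleton K t (p := h)
    exact IntermediateField.algebra_adjoin_le_adjoin K {t} this
  have : FiniteDimensional K E := IntermediateField.adjoin.finiteDimensional htint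
  have : FiniteDimensional K₀ E := FiniteDimensional.trans K₀ K E
  have h2 : Module.finrank K₀ K * Module.finrank K E = Module.finrank K₀ E :=
    Module.finrank_mul_finrank K₀ K E
  have h3 : Module.finrank K E = (minpoly K t).natDegree := IntermediateField.adjoin.finrank htint
  have h4 : (minpoly K₀ (⟨ξ, hξE⟩ : E)).natDegree ≤ Module.finrank K₀ E := minpoly.natDegree_le _
  have : IsScalarTower K₀ E ℂ := IsScalarTower.of_algebraMap_eq fun _ => rfl
  have h5 : minpoly K₀ (algebraMap E ℂ ⟨ξ, hξE⟩) = minpoly K₀ (⟨ξ, hξE⟩ : E) :=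
    minpoly.algebraMap_eq (algebraMap E ℂ).injective _
  have h6 : minpoly K₀ ξ = minpoly K₀ (⟨ξ, hξE⟩ : E) := h5
  rw [← h6, h1, ← h2, h3] at h4
  exact h4.trans (Nat.mul_le_mul_left _ hdeg)

theorem aux_pigeon (p : ℕ) (hp : 0 < p) (a b : ℂ) (ha : a ^ p = 1) (hb : b ^ p = 1) :
    ∃ u v u' v' : ℕ, (u, v) ≠ (u', v') ∧ u ≤ p.sqrt ∧ v ≤ p.sqrt ∧ u' ≤ p.sqrt ∧ v' ≤ p.sqrt ∧
      a ^ u * b ^ v = a ^ u' * b ^ v' := by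
  let m := p.sqrt
  obtain ⟨x, hx, y, hy, hxy, he⟩ := Finset.exists_ne_map_eq_of_card_lt_of_maps_to
    (s := Finset.range (m + 1) ×ˢ Finset.range (m + 1)) (t := nthRootsFinset p (1 : ℂ))
    (f := fun z : ℕ × ℕ => a ^ z.1 * b ^ z.2) (by
      rw [Finset.card_product, Finset.card_range]
      refine lt_of_le_of_lt ?_ (Nat.lt_succ_sqrt p)
      rw [nthRootsFinset]
      exact (Multiset.toFinset_card_le _).trans (card_nthRoots _ _)) (by
      intro z _
      rw [Finset.mem_coe, mem_nthRootsFinset hp]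
      rw [mul_pow, ← pow_mul, ← pow_mul, mul_comm z.1, mul_comm z.2, pow_mul, pow_mul, ha, hb]
      simp)
  simp only [Finset.mem_product, Finset.mem_range] at hx hy
  exact ⟨x.1, x.2, y.1, y.2, hxy, by omega, by omega, by omega, by omega, he⟩

/-- Diagonal coprimality: if `f, g` are multiplicatively independent nonconstant
polynomials with `gcd(f − 1, g − 1) = 1`, then `gcd(fⁿ − 1, gⁿ − 1) = 1` for
infinitely many `n ≥ 1`. -/
theorem stmt_15 (f g : Polynomial ℂ)
    (hf : 0 < f.natDegree) (hg : 0 < g.natDegree)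
    (hind : ¬ ∃ (ν₁ ν₂ : ℤ), (ν₁, ν₂) ≠ (0, 0) ∧
      (algebraMap (Polynomial ℂ) (RatFunc ℂ) f) ^ ν₁ *
        (algebraMap (Polynomial ℂ) (RatFunc ℂ) g) ^ ν₂ = 1)
    (hcop : IsCoprime (f - 1) (g - 1)) :
    {n : ℕ | 1 ≤ n ∧ IsCoprime (f ^ n - 1) (g ^ n - 1)}.Infinite := by
  obtain ⟨D, K, ⟨f', hf'⟩, ⟨g', hg'⟩, hK⟩ := aux_field f g
  have hdf : f'.natDegree = f.natDegree := by rw [← hf', natDegree_map]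
  have hdg : g'.natDegree = g.natDegree := by rw [← hg', natDegree_map]
  set C := D * (f.natDegree + g.natDegree) with hC
  apply Set.infinite_of_forall_exists_gt
  intro N
  obtain ⟨p, hpN, hp⟩ := Nat.exists_infinite_primes (N + 1 + (C + 2) * (C + 2))
  refine ⟨p, ⟨hp.one_le, ?_⟩, by omega⟩
  rw [isCoprime_iff_aeval_ne_zero_of_isAlgClosed (k := ℂ) ℂ]
  rw [isCoprime_iff_aeval_ne_zero_of_isAlgClosed (k := ℂ) ℂ] at hcop
  intro t
  by_contra hcon
  push Not at hcon
  obtain ⟨h1, h2⟩ := hcon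
  have hft : aeval t f' = aeval t f := by rw [← hf', aeval_map_algebraMap]
  have hgt : aeval t g' = aeval t g := by rw [← hg', aeval_map_algebraMap]
  have ha : (aeval t f) ^ p = 1 := by simpa [sub_eq_zero] using h1
  have hb : (aeval t g) ^ p = 1 := by simpa [sub_eq_zero] using h2
  obtain ⟨u, v, u', v', hne, hu, hv, hu', hv', he⟩ := aux_pigeon p hp.pos _ _ ha hb
  have hf0 : f ≠ 0 := by rintro rfl; simp at hf
  have hg0 : g ≠ 0 := by rintro rfl; simp at hg
  let P : K[X] := f' ^ u * g' ^ v - f' ^ u' * g' ^ v'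
  have hP0 : P ≠ 0 := by
    intro h0
    have h3 := congrArg (Polynomial.map (algebraMap K ℂ)) (sub_eq_zero.1 h0)
    simp only [Polynomial.map_mul, Polynomial.map_pow, hf', hg'] at h3
    have h4 := congrArg (algebraMap ℂ[X] (RatFunc ℂ)) h3
    simp only [map_mul, map_pow] at h4
    have hf1 : algebraMap ℂ[X] (RatFunc ℂ) f ≠ 0 := RatFunc.algebraMap_ne_zero hf0
    have hg1 : algebraMap ℂ[X] (RatFunc ℂ) g ≠ 0 := RatFunc.algebraMap_ne_zero hg0
    refine hind ⟨(u : ℤ) - u', (v : ℤ) - v', ?_, ?_⟩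
    · intro h5
      apply hne
      simp only [Prod.mk.injEq] at h5 ⊢
      omega
    · rw [zpow_sub₀ hf1, zpow_sub₀ hg1]
      simp only [zpow_natCast]
      rw [div_mul_div_comm, h4]
      exact div_self (mul_ne_zero (pow_ne_zero _ hf1) (pow_ne_zero _ hg1))
  have hPt : aeval t P = 0 := by
    simp only [P, map_sub, map_mul, map_pow, hft, hgt]
    rw [he, sub_self]
  have hmon : ∀ i j : ℕ, i ≤ p.sqrt → j ≤ p.sqrt →
      (f' ^ i * g' ^ j).natDegree ≤ p.sqrt * (f.natDegree + g.natDegree) := by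
    intro i j hi hj
    refine natDegree_mul_le.trans ?_
    rw [natDegree_pow, natDegree_pow, hdf, hdg, mul_add]
    gcongr
  have hPd : P.natDegree ≤ p.sqrt * (f.natDegree + g.natDegree) :=
    (natDegree_sub_le _ _).trans (max_le (hmon _ _ hu hv) (hmon _ _ hu' hv'))
  have hprim : ∀ z : ℂ, z ^ p = 1 → z - 1 ≠ 0 → IsPrimitiveRoot z p := by
    intro z hz hz1
    have : Fact p.Prime := ⟨hp⟩
    exact IsPrimitiveRoot.iff_orderOf.2 (orderOf_eq_prime hz (sub_ne_zero.1 hz1))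
  have key : p - 1 ≤ D * P.natDegree := by
    rcases hcop t with h | h
    · exact hK p (aeval t f) t P f' hp (hprim _ ha (by simpa using h)) hft hP0 hPt
    · exact hK p (aeval t g) t P g' hp (hprim _ hb (by simpa using h)) hgt hP0 hPt
  have h7 : p - 1 ≤ p.sqrt * C := by
    refine key.trans ((Nat.mul_le_mul_left D hPd).trans (le_of_eq ?_))
    rw [hC]; ring
  have h8 := Nat.sqrt_le p
  have h9 : C + 2 ≤ p.sqrt := Nat.le_sqrt.2 (by omega)
  have h10 : p ≤ p.sqrt * C + 1 := by omega
  nlinarith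
end
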